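/- arXiv:2601.22520 — 2 statements merged into one kernel-verified Lean document; each statement's English description precedes it below -/
import Mathlib

section
/- Let N ≥ 1 and 0 < γ/θ < N for some θ ∈ (0,1]. For the heat semigroup e^{tΔ} on ℝ^N with Gaussian kernel G(x,t) = (4πt)^{−N/2} e^{−|x|²/(4t)} and any nonnegative φ ∈ L¹_ul(ℝ^N), there is a constant C = C(N, γ/θ) such that e^{tΔ}[|·|^{−γ/θ} e^{sΔ}φ](x) ≤ C (1/t + 1/s)^{γ/(2θ)} [e^{(t+s)Δ}φ](x) for all t, s > 0 and a.e. x. -/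
open MeasureTheory Filter Set Metric Real

/-- The Gaussian heat kernel on ℝ^N. -/
noncomputable def heatKernel (N : ℕ) (x : EuclideanSpace ℝ (Fin N)) (t : ℝ) : ℝ :=
  (4 * π * t) ^ (-(N : ℝ) / 2) * Real.exp (-‖x‖ ^ 2 / (4 * t))

/-- Membership in the uniformly local L¹ space L¹_ul(ℝ^N). -/
def MemL1ul (N : ℕ) (φ : EuclideanSpace ℝ (Fin N) → ℝ) : Prop :=
  (∀ y, MeasureTheory.IntegrableOn φ (Metric.ball y 1)) ∧
  ∃ M : ℝ, ∀ y, (∫ x in Metric.ball y 1, |φ x|) ≤ M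

/-!
Completing the square shows that `G(x - y, t) G(y - z, s)` equals `G(x - z, t + s)` times the heat
kernel in `y` at time `τ = ts / (t + s)` centred at a point of the segment `[x, z]` (the law of the
Brownian bridge). By Tonelli, the iterated integral with weight `|y|^{-α}` is therefore at most
`∫ G(x - z, t + s) φ(z) dz` times the supremum over all `m` of `∫ |y|^{-α} G(y - m, τ) dy`.
Splitting the latter integral at `|y| = √τ` bounds it by `C τ^{-α/2}`, and `1 / τ = 1 / t + 1 / s`.

The integral `∫ G(x - z, t + s) φ(z) dz` converges for `φ ∈ L¹_ul`: on a unit ball around `y` the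
kernel `G(x - z, t)` is at most a constant times `G(x - y, 2t)`, so averaging over `y` reduces the
claim to the integrability of `G(·, 2t)`.
-/

open scoped ENNReal NNReal

section NormPower

variable {E : Type*} [NormedAddCommGroup E] [MeasurableSpace E] [BorelSpace E] {μ : Measure E}

theorem lintegral_norm_rpow_neg_mul_le {α r : ℝ} (hα : 0 ≤ α) (hr : 0 < r) {k : E → ℝ≥0∞}
    {M : ℝ≥0∞} (hk : ∀ y, k y ≤ M) :
    ∫⁻ y, .ofReal (‖y‖ ^ (-α)) * k y ∂μ ≤
      (∫⁻ y in ball 0 r, .ofReal (‖y‖ ^ (-α)) ∂μ) * M + .ofReal (r ^ (-α)) * ∫⁻ y, k y ∂μ := by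
  rw [← lintegral_add_compl _ (measurableSet_ball (x := (0 : E)) (ε := r))]
  gcongr ?_ + ?_
  · rw [← lintegral_mul_const _ (by fun_prop)]
    gcongr with y
    exact hk y
  · calc ∫⁻ y in (ball 0 r)ᶜ, .ofReal (‖y‖ ^ (-α)) * k y ∂μ
        ≤ ∫⁻ y in (ball 0 r)ᶜ, .ofReal (r ^ (-α)) * k y ∂μ := by
          refine setLIntegral_mono' measurableSet_ball.compl fun y hy => ?_
          refine mul_le_mul_left (ENNReal.ofReal_le_ofReal ?_) _
          exact rpow_le_rpow_of_nonpos hr (by simpa using hy) (neg_nonpos.2 hα)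
      _ ≤ .ofReal (r ^ (-α)) * ∫⁻ y, k y ∂μ := by
          rw [lintegral_const_mul' _ _ ENNReal.ofReal_ne_top]
          gcongr
          exact Measure.restrict_le_self

variable [NormedSpace ℝ E] [FiniteDimensional ℝ E] [μ.IsAddHaarMeasure]

theorem integrableOn_ball_norm_rpow_neg {α : ℝ} (hd : 1 ≤ Module.finrank ℝ E)
    (hα : α < Module.finrank ℝ E) (r : ℝ) :
    IntegrableOn (fun y : E => ‖y‖ ^ (-α)) (ball 0 r) μ := by
  refine integrableOn_ball_of_norm_le_rpow (C := 1) hd hα (ae_of_all _ fun y => ?_)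
    (measurable_norm.pow_const _).aestronglyMeasurable
  rw [norm_of_nonneg (by positivity), one_mul]

theorem setIntegral_ball_norm_rpow (p : ℝ) {r : ℝ} (hr : 0 < r) :
    ∫ y in ball (0 : E) r, ‖y‖ ^ p ∂μ =
      r ^ (Module.finrank ℝ E + p) * ∫ y in ball (0 : E) 1, ‖y‖ ^ p ∂μ := by
  have hscale := Measure.setIntegral_comp_smul_of_pos μ (fun y : E => ‖y‖ ^ p) (ball 0 1) hr
  simp only [smul_unitBall_of_pos hr, norm_smul, norm_of_nonneg hr.le,
    mul_rpow hr.le (norm_nonneg _), integral_const_mul, smul_eq_mul] at hscale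
  rw [rpow_add hr, mul_assoc, hscale, rpow_natCast, mul_inv_cancel_left₀ (by positivity)]

end NormPower

theorem measure_ball_mul_lintegral_mul_le {E : Type*} [NormedAddCommGroup E] [NormedSpace ℝ E]
    [FiniteDimensional ℝ E] [MeasurableSpace E] [BorelSpace E] {μ : Measure E}
    [μ.IsAddHaarMeasure] {k h f : E → ℝ≥0∞} {r : ℝ} {M : ℝ≥0} (hk : AEMeasurable k μ)
    (hf : AEMeasurable f μ) (hkh : ∀ y, ∀ z ∈ ball y r, k z ≤ h y)
    (hfM : ∀ y, ∫⁻ z in ball y r, f z ∂μ ≤ M) :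
    μ (ball 0 r) * ∫⁻ z, k z * f z ∂μ ≤ (∫⁻ y, h y ∂μ) * M := by
  let S : Set (E × E) := {p | p.2 ∈ ball p.1 r}
  let F : E → E → ℝ≥0∞ := fun y z => S.indicator (fun p => k p.2 * f p.2) (y, z)
  have hF : AEMeasurable (Function.uncurry F) (μ.prod μ) := by
    refine (AEMeasurable.mul hk.comp_snd hf.comp_snd).indicator ?_
    exact (isOpen_lt (continuous_snd.dist continuous_fst) continuous_const).measurableSet
  have hslice (y z : E) : F y z = (ball z r).indicator (fun _ => k z * f z) y := by
    simp only [F, S, indicator, mem_ofPred_eq, mem_ball, dist_comm z y]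
  calc μ (ball 0 r) * ∫⁻ z, k z * f z ∂μ
      = ∫⁻ z, ∫⁻ y, F y z ∂μ ∂μ := by
        rw [← lintegral_const_mul'' _ (by fun_prop)]
        simp only [hslice, lintegral_indicator_const measurableSet_ball,
          Measure.addHaar_ball_center, mul_comm]
    _ = ∫⁻ y, ∫⁻ z, F y z ∂μ ∂μ := (lintegral_lintegral_swap hF).symm
    _ = ∫⁻ y, ∫⁻ z in ball y r, k z * f z ∂μ ∂μ := by
        simp only [← lintegral_indicator measurableSet_ball]
        rfl
    _ ≤ ∫⁻ y, h y * M ∂μ := by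
        refine lintegral_mono fun y => ?_
        calc ∫⁻ z in ball y r, k z * f z ∂μ
            ≤ ∫⁻ z in ball y r, h y * f z ∂μ :=
              setLIntegral_mono' measurableSet_ball fun z hz => by gcongr; exact hkh y z hz
          _ = h y * ∫⁻ z in ball y r, f z ∂μ := lintegral_const_mul'' _ hf.restrict
          _ ≤ h y * M := by gcongr; exact hfM y
    _ = (∫⁻ y, h y ∂μ) * M := lintegral_mul_const' _ _ ENNReal.coe_ne_top

theorem norm_sub_sq_div_add_norm_sub_sq_div {E : Type*} [NormedAddCommGroup E]
    [InnerProductSpace ℝ E] (x y z : E) {t s : ℝ} (ht : 0 < t) (hs : 0 < s) :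
    ‖x - y‖ ^ 2 / t + ‖y - z‖ ^ 2 / s =
      ‖x - z‖ ^ 2 / (t + s) +
        ‖y - ((s / (t + s)) • x + (t / (t + s)) • z)‖ ^ 2 / (t * s / (t + s)) := by
  have hxz : x - z = (x - y) + (y - z) := by abel
  have hcentre : y - ((s / (t + s)) • x + (t / (t + s)) • z) =
      (t / (t + s)) • (y - z) - (s / (t + s)) • (x - y) := by
    match_scalars <;> field_simp
    ring
  rw [hxz, hcentre, norm_add_sq_real (x - y), norm_sub_sq_real (_ • _), norm_smul, norm_smul,
    inner_smul_left, inner_smul_right, real_inner_comm (x - y) (y - z)]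
  simp only [norm_eq_abs, mul_pow, sq_abs, conj_trivial]
  field_simp
  ring

section HeatKernel

variable {N : ℕ} {t s : ℝ}

theorem heatKernel_pos (x : EuclideanSpace ℝ (Fin N)) (ht : 0 < t) : 0 < heatKernel N x t := by
  unfold heatKernel
  positivity

@[fun_prop]
theorem continuous_heatKernel (t : ℝ) : Continuous fun x => heatKernel N x t := by
  unfold heatKernel
  fun_prop

@[fun_prop]
theorem measurable_heatKernel (t : ℝ) : Measurable fun x => heatKernel N x t :=
  (continuous_heatKernel t).measurable

theorem heatKernel_sub_comm (x y : EuclideanSpace ℝ (Fin N)) (t : ℝ) :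
    heatKernel N (x - y) t = heatKernel N (y - x) t := by
  simp only [heatKernel, norm_sub_rev]

theorem heatKernel_le (x : EuclideanSpace ℝ (Fin N)) (ht : 0 < t) :
    heatKernel N x t ≤ (4 * π * t) ^ (-(N : ℝ) / 2) := by
  refine mul_le_of_le_one_right (by positivity) (exp_le_one_iff.2 ?_)
  exact div_nonpos_of_nonpos_of_nonneg (by simp) (by positivity)

theorem integral_heatKernel (ht : 0 < t) : ∫ x, heatKernel N x t = 1 := by
  have hgauss : ∫ x : EuclideanSpace ℝ (Fin N), exp (-‖x‖ ^ 2 / (4 * t)) =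
      (4 * π * t) ^ ((N : ℝ) / 2) := by
    convert GaussianFourier.integral_rexp_neg_mul_sq_norm (V := EuclideanSpace ℝ (Fin N))
      (b := 1 / (4 * t)) (by positivity) using 2
    · ext x
      ring_nf
    · field_simp
    · rw [finrank_euclideanSpace_fin]
  simp only [heatKernel]
  rw [integral_const_mul, hgauss, ← rpow_add (by positivity), neg_div, neg_add_cancel, rpow_zero]

theorem integrable_heatKernel (ht : 0 < t) : Integrable fun x => heatKernel N x t :=
  .of_integral_ne_zero (by rw [integral_heatKernel ht]; exact one_ne_zero)

theorem lintegral_heatKernel_sub (m : EuclideanSpace ℝ (Fin N)) (ht : 0 < t) :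
    ∫⁻ y, .ofReal (heatKernel N (y - m) t) = 1 := by
  rw [lintegral_sub_right_eq_self (fun y => ENNReal.ofReal (heatKernel N y t)) m,
    ← ofReal_integral_eq_lintegral_ofReal (integrable_heatKernel ht)
      (ae_of_all _ fun y => (heatKernel_pos y ht).le), integral_heatKernel ht, ENNReal.ofReal_one]

theorem heatKernel_sub_mul_heatKernel_sub (x y z : EuclideanSpace ℝ (Fin N)) (ht : 0 < t)
    (hs : 0 < s) :
    heatKernel N (x - y) t * heatKernel N (y - z) s =
      heatKernel N (x - z) (t + s) *
        heatKernel N (y - ((s / (t + s)) • x + (t / (t + s)) • z)) (t * s / (t + s)) := by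
  have hexponent := norm_sub_sq_div_add_norm_sub_sq_div x y z ht hs
  simp only [heatKernel]
  rw [mul_mul_mul_comm, mul_mul_mul_comm ((4 * π * (t + s)) ^ (-(N : ℝ) / 2)),
    ← mul_rpow (by positivity) (by positivity), ← mul_rpow (by positivity) (by positivity),
    ← exp_add, ← exp_add]
  congr 2
  · field_simp
  · simp only [neg_div, mul_comm (4 : ℝ), ← div_div]
    linear_combination (-1 / 4) * hexponent

theorem heatKernel_sub_mul_heatKernel_sub_le (x y z : EuclideanSpace ℝ (Fin N)) (ht : 0 < t)
    (hs : 0 < s) :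
    heatKernel N (x - y) t * heatKernel N (y - z) s ≤
      heatKernel N (x - z) (t + s) * (4 * π * (t * s / (t + s))) ^ (-(N : ℝ) / 2) := by
  rw [heatKernel_sub_mul_heatKernel_sub x y z ht hs]
  have hpos := heatKernel_pos (x - z) (add_pos ht hs)
  gcongr
  exact heatKernel_le _ (by positivity)

theorem exists_heatKernel_sub_le_mul_heatKernel_sub (N : ℕ) (ht : 0 < t) (r : ℝ) :
    ∃ A : ℝ≥0, ∀ x y : EuclideanSpace ℝ (Fin N), ∀ z ∈ ball y r,
      heatKernel N (x - z) t ≤ A * heatKernel N (x - y) (t + t) := by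
  let c : ℝ := (4 * π * t) ^ (-(N : ℝ) / 2) * exp (-r ^ 2 / (4 * t))
  have hc : 0 < c := by positivity
  let B : ℝ := (4 * π * (t * t / (t + t))) ^ (-(N : ℝ) / 2)
  refine ⟨⟨B / c, by positivity⟩, fun x y z hz => ?_⟩
  have hlower : c ≤ heatKernel N (z - y) t := by
    simp only [c, heatKernel]
    gcongr
    exact (mem_ball_iff_norm.1 hz).le
  have hpos := heatKernel_pos (x - z) ht
  calc heatKernel N (x - z) t
      ≤ heatKernel N (x - z) t * heatKernel N (z - y) t / c := by
        rw [le_div_iff₀ hc]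
        gcongr
    _ ≤ heatKernel N (x - y) (t + t) * B / c := by
        exact div_le_div_of_nonneg_right
          (heatKernel_sub_mul_heatKernel_sub_le x z y ht ht) hc.le
    _ = B / c * heatKernel N (x - y) (t + t) := by ring

theorem exists_lintegral_norm_rpow_neg_mul_heatKernel_le {α : ℝ} (hα : 0 ≤ α) (hαN : α < N) :
    ∃ C > 0, ∀ (m : EuclideanSpace ℝ (Fin N)) (τ : ℝ), 0 < τ →
      ∫⁻ y, .ofReal (‖y‖ ^ (-α)) * .ofReal (heatKernel N (y - m) τ) ≤
        .ofReal (C * τ ^ (-(α / 2))) := by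
  have hN : 1 ≤ N := by exact_mod_cast hα.trans_lt hαN
  let I : ℝ := ∫ y in ball (0 : EuclideanSpace ℝ (Fin N)) 1, ‖y‖ ^ (-α)
  have : 0 ≤ I := integral_nonneg fun y => by positivity
  refine ⟨(4 * π) ^ (-(N : ℝ) / 2) * I + 1, by positivity, fun m τ hτ => ?_⟩
  have hsqrt (p : ℝ) : √τ ^ p = τ ^ (p / 2) := by
    rw [sqrt_eq_rpow, ← rpow_mul hτ.le]
    ring_nf
  have hball : ∫⁻ y in ball (0 : EuclideanSpace ℝ (Fin N)) √τ, .ofReal (‖y‖ ^ (-α)) =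
      .ofReal (τ ^ ((N - α) / 2) * I) := by
    rw [← ofReal_integral_eq_lintegral_ofReal
      (integrableOn_ball_norm_rpow_neg (by simpa using hN) (by simpa using hαN) _)
      (ae_of_all _ fun y => by positivity), setIntegral_ball_norm_rpow _ (sqrt_pos.2 hτ),
      finrank_euclideanSpace_fin, ← sub_eq_add_neg, hsqrt]
  have hexponent : τ ^ (((N : ℝ) - α) / 2) * τ ^ (-(N : ℝ) / 2) = τ ^ (-(α / 2)) := by
    rw [← rpow_add hτ]
    ring_nf
  calc ∫⁻ y, .ofReal (‖y‖ ^ (-α)) * .ofReal (heatKernel N (y - m) τ)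
      ≤ .ofReal (τ ^ (((N : ℝ) - α) / 2) * I) * .ofReal ((4 * π * τ) ^ (-(N : ℝ) / 2)) +
          .ofReal (τ ^ (-(α / 2))) := by
        have hsplit := lintegral_norm_rpow_neg_mul_le (μ := volume) hα (sqrt_pos.2 hτ)
          fun y => ENNReal.ofReal_le_ofReal (heatKernel_le (y - m) hτ)
        rwa [hball, lintegral_heatKernel_sub m hτ, mul_one, hsqrt, neg_div 2 α] at hsplit
    _ = .ofReal (((4 * π) ^ (-(N : ℝ) / 2) * I + 1) * τ ^ (-(α / 2))) := by
        rw [← ENNReal.ofReal_mul (by positivity),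
          ← ENNReal.ofReal_add (by positivity) (by positivity),
          mul_rpow (by positivity) hτ.le]
        congr 1
        linear_combination (I * (4 * π) ^ (-(N : ℝ) / 2)) * hexponent

theorem lintegral_heatKernel_mul_weight_mul_lintegral_eq
    {w f : EuclideanSpace ℝ (Fin N) → ℝ≥0∞} (hw : AEMeasurable w) (hf : AEMeasurable f)
    (ht : 0 < t) (hs : 0 < s) (x : EuclideanSpace ℝ (Fin N)) :
    ∫⁻ y, .ofReal (heatKernel N (x - y) t) *
        (w y * ∫⁻ z, .ofReal (heatKernel N (y - z) s) * f z) =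
      ∫⁻ z, (∫⁻ y, w y * .ofReal (heatKernel N
          (y - ((s / (t + s)) • x + (t / (t + s)) • z)) (t * s / (t + s)))) *
        (.ofReal (heatKernel N (x - z) (t + s)) * f z) := by
  have hmeas : AEMeasurable (Function.uncurry fun y z => .ofReal (heatKernel N (x - y) t) *
      (w y * (.ofReal (heatKernel N (y - z) s) * f z))) (volume.prod volume) := by
    have := hw.comp_fst (ν := (volume : Measure (EuclideanSpace ℝ (Fin N))))
    have := hf.comp_snd (μ := (volume : Measure (EuclideanSpace ℝ (Fin N))))
    simp only [Function.uncurry_def]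
    fun_prop
  calc ∫⁻ y, .ofReal (heatKernel N (x - y) t) *
        (w y * ∫⁻ z, .ofReal (heatKernel N (y - z) s) * f z)
      = ∫⁻ y, ∫⁻ z, .ofReal (heatKernel N (x - y) t) *
          (w y * (.ofReal (heatKernel N (y - z) s) * f z)) := by
        refine lintegral_congr fun y => ?_
        rw [← lintegral_const_mul'' _ (by fun_prop), ← lintegral_const_mul'' _ (by fun_prop)]
    _ = ∫⁻ z, ∫⁻ y, .ofReal (heatKernel N (x - y) t) *
          (w y * (.ofReal (heatKernel N (y - z) s) * f z)) := lintegral_lintegral_swap hmeas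
    _ = _ := by
        refine lintegral_congr fun z => ?_
        rw [← lintegral_mul_const'' _ (by fun_prop)]
        refine lintegral_congr fun y => ?_
        have hbridge := congrArg ENNReal.ofReal (heatKernel_sub_mul_heatKernel_sub x y z ht hs)
        rw [ENNReal.ofReal_mul (heatKernel_pos _ ht).le,
          ENNReal.ofReal_mul (heatKernel_pos _ (add_pos ht hs)).le] at hbridge
        calc _ = w y * f z * (.ofReal (heatKernel N (x - y) t) *
              .ofReal (heatKernel N (y - z) s)) := by ring
          _ = _ := by
            rw [hbridge]
            ring

theorem lintegral_heatKernel_mul_weight_mul_lintegral_le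
    {w f : EuclideanSpace ℝ (Fin N) → ℝ≥0∞} {B : ℝ≥0∞} (hw : AEMeasurable w) (hf : AEMeasurable f)
    (ht : 0 < t) (hs : 0 < s)
    (hB : ∀ m, ∫⁻ y, w y * .ofReal (heatKernel N (y - m) (t * s / (t + s))) ≤ B)
    (x : EuclideanSpace ℝ (Fin N)) :
    ∫⁻ y, .ofReal (heatKernel N (x - y) t) *
        (w y * ∫⁻ z, .ofReal (heatKernel N (y - z) s) * f z) ≤
      B * ∫⁻ z, .ofReal (heatKernel N (x - z) (t + s)) * f z := by
  rw [lintegral_heatKernel_mul_weight_mul_lintegral_eq hw hf ht hs,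
    ← lintegral_const_mul'' _ (by fun_prop)]
  gcongr with z
  exact hB _

theorem enorm_heatKernel_mul (x : EuclideanSpace ℝ (Fin N)) (ht : 0 < t) (a : ℝ) :
    ‖heatKernel N x t * a‖ₑ = .ofReal (heatKernel N x t) * ‖a‖ₑ := by
  rw [enorm_mul, enorm_of_nonneg (heatKernel_pos x ht).le]

theorem lintegral_enorm_heatKernel_mul_weight_mul_integral_le
    {w φ : EuclideanSpace ℝ (Fin N) → ℝ} {B : ℝ≥0∞} (hw : AEStronglyMeasurable w)
    (hφ : AEStronglyMeasurable φ) (ht : 0 < t) (hs : 0 < s)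
    (hB : ∀ m, ∫⁻ y, ‖w y‖ₑ * .ofReal (heatKernel N (y - m) (t * s / (t + s))) ≤ B)
    (x : EuclideanSpace ℝ (Fin N)) :
    ∫⁻ y, ‖heatKernel N (x - y) t * (w y * ∫ z, heatKernel N (y - z) s * φ z)‖ₑ ≤
      B * ∫⁻ z, ‖heatKernel N (x - z) (t + s) * φ z‖ₑ := by
  have hinner (y : EuclideanSpace ℝ (Fin N)) : ‖∫ z, heatKernel N (y - z) s * φ z‖ₑ ≤
      ∫⁻ z, .ofReal (heatKernel N (y - z) s) * ‖φ z‖ₑ := by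
    simpa only [enorm_heatKernel_mul _ hs] using
      enorm_integral_le_lintegral_enorm fun z => heatKernel N (y - z) s * φ z
  calc ∫⁻ y, ‖heatKernel N (x - y) t * (w y * ∫ z, heatKernel N (y - z) s * φ z)‖ₑ
      ≤ ∫⁻ y, .ofReal (heatKernel N (x - y) t) *
          (‖w y‖ₑ * ∫⁻ z, .ofReal (heatKernel N (y - z) s) * ‖φ z‖ₑ) := by
        gcongr with y
        rw [enorm_heatKernel_mul _ ht, enorm_mul]
        gcongr
        exact hinner y
    _ ≤ B * ∫⁻ z, .ofReal (heatKernel N (x - z) (t + s)) * ‖φ z‖ₑ :=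
        lintegral_heatKernel_mul_weight_mul_lintegral_le hw.enorm hφ.enorm ht hs hB x
    _ = B * ∫⁻ z, ‖heatKernel N (x - z) (t + s) * φ z‖ₑ := by
        simp only [enorm_heatKernel_mul _ (add_pos ht hs)]

theorem aestronglyMeasurable_of_integrable_heatKernel_mul
    {φ : EuclideanSpace ℝ (Fin N) → ℝ} (ht : 0 < t) {x : EuclideanSpace ℝ (Fin N)}
    (hφ : Integrable fun y => heatKernel N (x - y) t * φ y) : AEStronglyMeasurable φ := by
  have hdiv : φ = fun y => (heatKernel N (x - y) t)⁻¹ * (heatKernel N (x - y) t * φ y) := by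
    ext y
    rw [inv_mul_cancel_left₀ (heatKernel_pos _ ht).ne']
  rw [hdiv]
  exact AEStronglyMeasurable.mul (Measurable.aestronglyMeasurable (by fun_prop))
    hφ.aestronglyMeasurable

theorem aestronglyMeasurable_integral_heatKernel_mul {φ : EuclideanSpace ℝ (Fin N) → ℝ}
    (hφ : AEStronglyMeasurable φ) (t : ℝ) :
    AEStronglyMeasurable fun y => ∫ z, heatKernel N (y - z) t * φ z :=
  AEStronglyMeasurable.integral_prod_right'
    (f := fun p : EuclideanSpace ℝ (Fin N) × EuclideanSpace ℝ (Fin N) =>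
      heatKernel N (p.1 - p.2) t * φ p.2)
    ((Continuous.aestronglyMeasurable (by fun_prop)).mul hφ.comp_snd)

end HeatKernel

namespace MemL1ul

variable {N : ℕ} {φ : EuclideanSpace ℝ (Fin N) → ℝ}

theorem aestronglyMeasurable (hφ : MemL1ul N φ) : AEStronglyMeasurable φ :=
  LocallyIntegrable.aestronglyMeasurable fun y => ⟨ball y 1, ball_mem_nhds y one_pos, hφ.1 y⟩

theorem exists_setLIntegral_ball_enorm_le (hφ : MemL1ul N φ) :
    ∃ M : ℝ≥0, ∀ y, ∫⁻ z in ball y 1, ‖φ z‖ₑ ≤ M := by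
  obtain ⟨M, hM⟩ := hφ.2
  refine ⟨M.toNNReal, fun y => ?_⟩
  rw [← ofReal_integral_norm_eq_lintegral_enorm (hφ.1 y)]
  exact ENNReal.ofReal_le_ofReal (hM y)

theorem integrable_heatKernel_mul (hφ : MemL1ul N φ) {t : ℝ} (ht : 0 < t)
    (x : EuclideanSpace ℝ (Fin N)) : Integrable fun z => heatKernel N (x - z) t * φ z := by
  obtain ⟨M, hM⟩ := hφ.exists_setLIntegral_ball_enorm_le
  obtain ⟨A, hA⟩ := exists_heatKernel_sub_le_mul_heatKernel_sub N ht 1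
  have hcompare (y z : EuclideanSpace ℝ (Fin N)) (hz : z ∈ ball y 1) :
      ENNReal.ofReal (heatKernel N (x - z) t) ≤ A * .ofReal (heatKernel N (y - x) (t + t)) := by
    rw [heatKernel_sub_comm y x, ← ENNReal.ofReal_coe_nnreal, ← ENNReal.ofReal_mul A.coe_nonneg]
    exact ENNReal.ofReal_le_ofReal (hA x y z hz)
  have haverage : volume (ball (0 : EuclideanSpace ℝ (Fin N)) 1) *
      ∫⁻ z, .ofReal (heatKernel N (x - z) t) * ‖φ z‖ₑ ≤ A * M := by
    have hbound := measure_ball_mul_lintegral_mul_le (μ := volume) (by fun_prop)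
      hφ.aestronglyMeasurable.enorm hcompare hM
    rwa [lintegral_const_mul _ (by fun_prop), lintegral_heatKernel_sub x (add_pos ht ht),
      mul_one] at hbound
  refine ⟨(Measurable.aestronglyMeasurable (by fun_prop)).mul hφ.aestronglyMeasurable, ?_⟩
  simp only [HasFiniteIntegral, enorm_heatKernel_mul _ ht]
  exact ENNReal.lt_top_of_mul_ne_top_right
    (ne_top_of_le_ne_top (ENNReal.mul_ne_top ENNReal.coe_ne_top ENNReal.coe_ne_top) haverage)
    (measure_ball_pos _ _ one_pos).ne'

end MemL1ul

theorem statement8_general {N : ℕ} {α : ℝ} (hα : 0 ≤ α) (hαN : α < N) :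
    ∃ C > 0, ∀ (φ : EuclideanSpace ℝ (Fin N) → ℝ) (t s : ℝ), 0 < t → 0 < s →
      ∀ x : EuclideanSpace ℝ (Fin N), Integrable (fun y => heatKernel N (x - y) (t + s) * φ y) →
        Integrable (fun y => heatKernel N (x - y) t *
          (‖y‖ ^ (-α) * ∫ z, heatKernel N (y - z) s * φ z)) ∧
        |∫ y, heatKernel N (x - y) t * (‖y‖ ^ (-α) * ∫ z, heatKernel N (y - z) s * φ z)| ≤
          C * (1 / t + 1 / s) ^ (α / 2) * ∫ y, heatKernel N (x - y) (t + s) * |φ y| := by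
  obtain ⟨C, hC, hweight⟩ := exists_lintegral_norm_rpow_neg_mul_heatKernel_le hα hαN
  refine ⟨C, hC, fun φ t s ht hs x hφ => ?_⟩
  have hts : 0 < t + s := add_pos ht hs
  have hφm := aestronglyMeasurable_of_integrable_heatKernel_mul hts hφ
  have hwm : AEStronglyMeasurable fun y : EuclideanSpace ℝ (Fin N) => ‖y‖ ^ (-α) :=
    (measurable_norm.pow_const _).aestronglyMeasurable
  have hrate : (t * s / (t + s)) ^ (-(α / 2)) = (1 / t + 1 / s) ^ (α / 2) := by
    rw [rpow_neg (by positivity), ← inv_rpow (by positivity)]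
    congr 1
    field_simp
    ring
  have hweight_enorm (m : EuclideanSpace ℝ (Fin N)) :
      ∫⁻ y, ‖‖y‖ ^ (-α)‖ₑ * .ofReal (heatKernel N (y - m) (t * s / (t + s))) ≤
        .ofReal (C * (1 / t + 1 / s) ^ (α / 2)) := by
    simpa only [enorm_of_nonneg (rpow_nonneg (norm_nonneg _) _), hrate] using
      hweight m (t * s / (t + s)) (by positivity)
  have hbound := lintegral_enorm_heatKernel_mul_weight_mul_integral_le hwm hφm ht hs
    hweight_enorm x
  rw [← ofReal_integral_norm_eq_lintegral_enorm hφ, ← ENNReal.ofReal_mul (by positivity)] at hbound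
  simp only [norm_mul, norm_of_nonneg (heatKernel_pos _ hts).le, norm_eq_abs (φ _)] at hbound
  refine ⟨⟨?_, hbound.trans_lt ENNReal.ofReal_lt_top⟩, ?_⟩
  · exact (Measurable.aestronglyMeasurable (by fun_prop)).mul
      (hwm.mul (aestronglyMeasurable_integral_heatKernel_mul hφm s))
  · have hnonneg : 0 ≤ ∫ y, heatKernel N (x - y) (t + s) * |φ y| :=
      integral_nonneg fun y => mul_nonneg (heatKernel_pos _ hts).le (abs_nonneg _)
    rw [← ENNReal.ofReal_le_ofReal_iff (by positivity), ← norm_eq_abs, ofReal_norm]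
    exact (enorm_integral_le_lintegral_enorm _).trans hbound

/-- smoothing estimate e^{tΔ}[|·|^{-α} e^{sΔ}φ] ≤ C (1/t + 1/s)^{α/2}
e^{(t+s)Δ}φ with α = γ/θ ∈ (0, N), for nonnegative φ ∈ L¹_ul(ℝ^N). -/
theorem statement8 (N : ℕ) (hN : 1 ≤ N) (γ θ : ℝ) (hθ : θ ∈ Set.Ioc (0:ℝ) 1)
    (hα : 0 < γ / θ ∧ γ / θ < N) :
    ∃ C > 0, ∀ φ : EuclideanSpace ℝ (Fin N) → ℝ,
      MemL1ul N φ → (∀ x, 0 ≤ φ x) → ∀ t > 0, ∀ s > 0,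
      ∀ᵐ x : EuclideanSpace ℝ (Fin N),
        (∫ y, heatKernel N (x - y) t *
            (‖y‖ ^ (-(γ / θ)) * ∫ z, heatKernel N (y - z) s * φ z)) ≤
          C * (1 / t + 1 / s) ^ (γ / (2 * θ)) *
            ∫ y, heatKernel N (x - y) (t + s) * φ y := by
  obtain ⟨C, hC, hbound⟩ := statement8_general hα.1.le hα.2
  refine ⟨C, hC, fun φ hφ h0 t ht s hs => ae_of_all _ fun x => ?_⟩
  have hx := (hbound φ t s ht hs x (hφ.integrable_heatKernel_mul (add_pos ht hs) x)).2
  simpa only [abs_of_nonneg (h0 _), div_div, mul_comm θ] using (le_abs_self _).trans hx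
end

section
/- Let 0 < r < N/(2−γ) with 0 < γ < min{2,N}, choose A with 2−γ < A < N/r, and let f ∈ S_q with q ∈ [1,∞) and q ≤ 1 + r. Define u₀(x) := F⁻¹(|x|^A) (when F(0) = ∞). Then u₀ ∈ L¹_ul(ℝ^N) and F(u₀)^{−r} ∈ L¹_ul(ℝ^N). -/
open MeasureTheory Filter Set Metric Real

/-!
Since `f' F → q`, for every `s > max 0 (q - 1)` the product `f F ^ (1 + s)` is eventually
nonincreasing, hence bounded, because its derivative is `(f' F - (1 + s)) F ^ s`. As `F' = -1 / f`,
this says that `F ^ (-s)` has derivative `s / (f F ^ (1 + s))` bounded below by a positive constant,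
so that `u ≤ a + C F(u) ^ (-s)`. Substituting `u = F⁻¹(|x| ^ A)` gives
`F⁻¹(|x| ^ A) ≤ a + C |x| ^ (-A s)`, where `s` may be chosen with `A s < N`, and `|x| ^ (-b)` is
uniformly locally integrable whenever `0 ≤ b < N`.
-/

section UniformlyLocal

variable {N : ℕ} {g h : EuclideanSpace ℝ (Fin N) → ℝ}

lemma memL1ul_of_integrable (hg : Integrable g) : MemL1ul N g :=
  ⟨fun _ => hg.integrableOn, ∫ x, |g x|, fun _ =>
    setIntegral_le_integral hg.abs (ae_of_all _ fun _ => abs_nonneg _)⟩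

lemma memL1ul_const (c : ℝ) : MemL1ul N fun _ => c := by
  refine ⟨fun y => integrableOn_const measure_ball_lt_top.ne,
    volume.real (ball (0 : EuclideanSpace ℝ (Fin N)) 1) * |c|, fun y => ?_⟩
  rw [setIntegral_const, smul_eq_mul, Measure.real, Measure.addHaar_ball_center, ← Measure.real]

lemma MemL1ul.add (hg : MemL1ul N g) (hh : MemL1ul N h) : MemL1ul N fun x => g x + h x := by
  obtain ⟨hg_int, Mg, hMg⟩ := hg
  obtain ⟨hh_int, Mh, hMh⟩ := hh
  refine ⟨fun y => (hg_int y).add (hh_int y), Mg + Mh, fun y => ?_⟩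
  calc ∫ x in ball y 1, |g x + h x|
      ≤ ∫ x in ball y 1, (|g x| + |h x|) :=
        integral_mono ((hg_int y).add (hh_int y)).abs ((hg_int y).abs.add (hh_int y).abs)
          fun x => abs_add_le (g x) (h x)
    _ = (∫ x in ball y 1, |g x|) + ∫ x in ball y 1, |h x| :=
        integral_add (hg_int y).abs (hh_int y).abs
    _ ≤ Mg + Mh := add_le_add (hMg y) (hMh y)

lemma MemL1ul.const_mul (hg : MemL1ul N g) (c : ℝ) : MemL1ul N fun x => c * g x := by
  obtain ⟨hg_int, M, hM⟩ := hg
  refine ⟨fun y => (hg_int y).const_mul c, |c| * M, fun y => ?_⟩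
  simp only [abs_mul, integral_const_mul]
  exact mul_le_mul_of_nonneg_left (hM y) (abs_nonneg c)

lemma MemL1ul.mono (hh : MemL1ul N h) (hg : AEStronglyMeasurable g)
    (hgh : ∀ᵐ x, |g x| ≤ h x) : MemL1ul N g := by
  obtain ⟨hh_int, M, hM⟩ := hh
  have hg_int (y) : IntegrableOn g (ball y 1) :=
    (hh_int y).mono' hg.restrict (ae_restrict_of_ae hgh)
  refine ⟨hg_int, M, fun y => le_trans ?_ (hM y)⟩
  exact integral_mono_ae (hg_int y).abs (hh_int y).abs
    (ae_restrict_of_ae (hgh.mono fun x hx => hx.trans (le_abs_self _)))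

lemma memL1ul_norm_rpow_neg {b : ℝ} (hb0 : 0 ≤ b) (hbN : b < N) :
    MemL1ul N fun x => ‖x‖ ^ (-b) := by
  have hN : 1 ≤ N := Nat.cast_pos.1 (hb0.trans_lt hbN)
  have hmeas : Measurable fun x : EuclideanSpace ℝ (Fin N) => ‖x‖ ^ (-b) := by fun_prop
  have hball : IntegrableOn (fun x : EuclideanSpace ℝ (Fin N) => ‖x‖ ^ (-b)) (ball 0 1) := by
    refine integrableOn_ball_of_norm_le_rpow (C := 1) (α := b) (by simpa) (by simpa) ?_
      hmeas.aestronglyMeasurable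
    exact ae_of_all _ fun x => by rw [one_mul, norm_of_nonneg (by positivity)]
  refine ((memL1ul_const 1).add
    (memL1ul_of_integrable (hball.integrable_indicator measurableSet_ball))).mono
    hmeas.aestronglyMeasurable (ae_of_all _ fun x => ?_)
  rw [abs_of_nonneg (by positivity)]
  by_cases hx : x ∈ ball 0 1
  · rw [indicator_of_mem hx]
    linarith
  · rw [indicator_of_notMem hx, add_zero]
    exact rpow_le_one_of_one_le_of_nonpos (by simpa using hx) (neg_nonpos.2 hb0)

end UniformlyLocal

section Radial

lemma measurable_comp_norm_of_antitoneOn {E : Type*} [NormedAddCommGroup E] [MeasurableSpace E]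
    [OpensMeasurableSpace E] {φ : ℝ → ℝ} (hφ : AntitoneOn φ (Ioi 0)) :
    Measurable fun x : E => φ ‖x‖ := by
  refine measurable_of_measurable_on_compl_singleton 0 ?_
  have hnorm : Measurable fun x : ({0}ᶜ : Set E) =>
      (⟨‖(x : E)‖, norm_pos_iff.2 x.2⟩ : Ioi (0 : ℝ)) :=
    Measurable.subtype_mk (by fun_prop)
  exact (antitoneOn_iff_antitone.1 hφ).measurable.comp hnorm

lemma memL1ul_comp_norm_rpow_of_antitoneOn {N : ℕ} {φ : ℝ → ℝ} {A s a C : ℝ} (hA : 0 ≤ A)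
    (hs : 0 ≤ s) (hAs : A * s < N) (hφ : AntitoneOn φ (Ioi 0))
    (hbound : ∀ σ > 0, |φ σ| ≤ a + C * σ ^ (-s)) :
    MemL1ul N fun x => φ (‖x‖ ^ A) := by
  have hAs0 : 0 ≤ A * s := mul_nonneg hA hs
  have : Nonempty (Fin N) := Fin.pos_iff_nonempty.1 (Nat.cast_pos.1 (hAs0.trans_lt hAs))
  have hanti : AntitoneOn (fun t => φ (t ^ A)) (Ioi 0) :=
    AntitoneOn.comp_MonotoneOn hφ
      ((monotoneOn_rpow_Ici_of_exponent_nonneg hA).mono Ioi_subset_Ici_self)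
      fun t ht => rpow_pos_of_pos ht A
  refine ((memL1ul_const a).add ((memL1ul_norm_rpow_neg hAs0 hAs).const_mul C)).mono
    (measurable_comp_norm_of_antitoneOn hanti).aestronglyMeasurable ?_
  filter_upwards [Measure.ae_ne volume 0] with x hx
  have hx_bound := hbound (‖x‖ ^ A) (rpow_pos_of_pos (norm_pos_iff.2 hx) A)
  rwa [← rpow_mul (norm_nonneg x), mul_neg] at hx_bound

end Radial

section TailIntegral

lemma setIntegral_pos_of_forall_pos {X : Type*} [MeasurableSpace X] {μ : Measure X} {s : Set X}
    {g : X → ℝ} (hs : MeasurableSet s) (hμs : 0 < μ s) (hg_int : IntegrableOn g s μ)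
    (hg_pos : ∀ x ∈ s, 0 < g x) : 0 < ∫ x in s, g x ∂μ := by
  rw [setIntegral_pos_iff_support_of_nonneg_ae
    (ae_restrict_of_forall_mem hs fun x hx => (hg_pos x hx).le) hg_int]
  exact hμs.trans_le (measure_mono fun x hx => ⟨(hg_pos x hx).ne', hx⟩)

lemma hasDerivAt_setIntegral_Ioi {E : Type*} [NormedAddCommGroup E] [NormedSpace ℝ E]
    [CompleteSpace E] {g : ℝ → E} {a u : ℝ} (hg_int : IntegrableOn g (Ioi a)) (hau : a < u)
    (hg_cont : ContinuousAt g u) :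
    HasDerivAt (fun v => ∫ τ in Ioi v, g τ) (-g u) u := by
  have hinterval : HasDerivAt (fun v => ∫ τ in v..u, g τ) (-g u) u :=
    intervalIntegral.integral_hasDerivAt_left IntervalIntegrable.refl
      ⟨Ioi a, Ioi_mem_nhds hau, hg_int.aestronglyMeasurable⟩ hg_cont
  refine (hinterval.add_const (∫ τ in Ioi u, g τ)).congr_of_eventuallyEq ?_
  filter_upwards [Ioi_mem_nhds hau] with v hav
  exact (intervalIntegral.integral_interval_add_Ioi
    (hg_int.mono_set (Ioi_subset_Ioi (mem_Ioi.1 hav).le))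
    (hg_int.mono_set (Ioi_subset_Ioi hau.le))).symm

end TailIntegral

section Growth

variable {f f' F : ℝ → ℝ} {s : ℝ} {D : Set ℝ}

lemma antitoneOn_of_hasDerivAt_neg_one_div (hD : Convex ℝ D) (hf_pos : ∀ x ∈ D, 0 < f x)
    (hF_deriv : ∀ x ∈ D, HasDerivAt F (-(1 / f x)) x) : AntitoneOn F D :=
  antitoneOn_of_hasDerivWithinAt_nonpos hD
    (fun x hx => (hF_deriv x hx).continuousAt.continuousWithinAt)
    (fun x hx => (hF_deriv x (interior_subset hx)).hasDerivWithinAt)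
    fun x hx => neg_nonpos.2 (one_div_pos.2 (hf_pos x (interior_subset hx))).le

lemma antitoneOn_mul_rpow_one_add (hD : Convex ℝ D) (hf_ne : ∀ x ∈ D, f x ≠ 0)
    (hf_deriv : ∀ x ∈ D, HasDerivAt f (f' x) x) (hF_pos : ∀ x ∈ D, 0 < F x)
    (hF_deriv : ∀ x ∈ D, HasDerivAt F (-(1 / f x)) x) (hf'F : ∀ x ∈ D, f' x * F x ≤ 1 + s) :
    AntitoneOn (fun u => f u * F u ^ (1 + s)) D := by
  have hderiv : ∀ x ∈ D, HasDerivAt (fun u => f u * F u ^ (1 + s))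
      ((f' x * F x - (1 + s)) * F x ^ s) x := by
    intro x hx
    have hf0 := hf_ne x hx
    convert! (hf_deriv x hx).mul
      ((hF_deriv x hx).rpow_const (p := 1 + s) (Or.inl (hF_pos x hx).ne')) using 1
    rw [add_sub_cancel_left, rpow_add (hF_pos x hx), rpow_one]
    field_simp
    ring
  refine antitoneOn_of_hasDerivWithinAt_nonpos hD
    (fun x hx => (hderiv x hx).continuousAt.continuousWithinAt)
    (fun x hx => (hderiv x (interior_subset hx)).hasDerivWithinAt) fun x hx => ?_
  have hxD := interior_subset hx
  exact mul_nonpos_of_nonpos_of_nonneg (sub_nonpos.2 (hf'F x hxD)) (rpow_nonneg (hF_pos x hxD).le s)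

lemma antitoneOn_sub_mul_rpow_neg {K : ℝ} (hs : s ≠ 0) (hD : Convex ℝ D)
    (hf_pos : ∀ x ∈ D, 0 < f x) (hF_pos : ∀ x ∈ D, 0 < F x)
    (hF_deriv : ∀ x ∈ D, HasDerivAt F (-(1 / f x)) x) (hK : ∀ x ∈ D, f x * F x ^ (1 + s) ≤ K) :
    AntitoneOn (fun u => u - K / s * F u ^ (-s)) D := by
  have hderiv : ∀ x ∈ D, HasDerivAt (fun u => u - K / s * F u ^ (-s))
      (1 - K / (f x * F x ^ (1 + s))) x := by
    intro x hx
    have hf0 := (hf_pos x hx).ne'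
    convert! (hasDerivAt_id x).sub
      (((hF_deriv x hx).rpow_const (p := -s) (Or.inl (hF_pos x hx).ne')).const_mul (K / s)) using 1
    rw [show -s - 1 = -(1 + s) by ring, rpow_neg (hF_pos x hx).le]
    field_simp
  refine antitoneOn_of_hasDerivWithinAt_nonpos hD
    (fun x hx => (hderiv x hx).continuousAt.continuousWithinAt)
    (fun x hx => (hderiv x (interior_subset hx)).hasDerivWithinAt) fun x hx => ?_
  have hxD := interior_subset hx
  have hpos : 0 < f x * F x ^ (1 + s) := mul_pos (hf_pos x hxD) (rpow_pos_of_pos (hF_pos x hxD) _)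
  exact sub_nonpos.2 ((one_le_div hpos).2 (hK x hxD))

lemma exists_forall_le_add_mul_rpow_neg {q : ℝ} (hs : 0 < s) (hqs : q < 1 + s)
    (hf_pos : ∀ x > 0, 0 < f x) (hf_deriv : ∀ x > 0, HasDerivAt f (f' x) x)
    (hF_pos : ∀ x > 0, 0 < F x) (hF_deriv : ∀ x > 0, HasDerivAt F (-(1 / f x)) x)
    (hq : Tendsto (fun ξ => f' ξ * F ξ) atTop (nhds q)) :
    ∃ a C : ℝ, ∀ u > 0, u ≤ a + C * F u ^ (-s) := by
  obtain ⟨a, ha⟩ := eventually_atTop.1 ((hq.eventually_le_const hqs).and (eventually_gt_atTop 0))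
  have ha_pos : ∀ x ∈ Ici a, 0 < x := fun x hx => (ha x hx).2
  have ha0 : 0 < a := ha_pos a self_mem_Ici
  have hK : ∀ x ∈ Ici a, f x * F x ^ (1 + s) ≤ f a * F a ^ (1 + s) := fun x hx =>
    antitoneOn_mul_rpow_one_add (convex_Ici a) (fun x hx => (hf_pos x (ha_pos x hx)).ne')
      (fun x hx => hf_deriv x (ha_pos x hx)) (fun x hx => hF_pos x (ha_pos x hx))
      (fun x hx => hF_deriv x (ha_pos x hx)) (fun x hx => (ha x hx).1) self_mem_Ici hx hx
  have hanti := antitoneOn_sub_mul_rpow_neg hs.ne' (convex_Ici a)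
    (fun x hx => hf_pos x (ha_pos x hx)) (fun x hx => hF_pos x (ha_pos x hx))
    (fun x hx => hF_deriv x (ha_pos x hx)) hK
  set C := f a * F a ^ (1 + s) / s
  have hterm : ∀ u > 0, 0 ≤ C * F u ^ (-s) := fun u hu =>
    mul_nonneg (div_nonneg (mul_nonneg (hf_pos a ha0).le (rpow_nonneg (hF_pos a ha0).le _)) hs.le)
      (rpow_nonneg (hF_pos u hu).le _)
  refine ⟨a, C, fun u hu => ?_⟩
  rcases le_total u a with hua | hau
  · linarith [hterm u hu]
  · have hcompare : u - C * F u ^ (-s) ≤ a - C * F a ^ (-s) := hanti self_mem_Ici hau hau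
    linarith [hterm a ha0]

end Growth

theorem statement18_general {N : ℕ} {r A q : ℝ} (hr : 0 ≤ r) (hA : 0 < A) (hAr : A * r < N)
    (hAq : A * (q - 1) < N) {f f' F Finv : ℝ → ℝ}
    (hf_diff : ∀ x > 0, HasDerivAt f (f' x) x) (hf_pos : ∀ x > 0, 0 < f x)
    (hF : ∀ u, F u = ∫ τ in Ioi u, 1 / f τ)
    (hF_fin : ∀ u > 0, IntegrableOn (fun τ => 1 / f τ) (Ioi u))
    (hq : Tendsto (fun ξ => f' ξ * F ξ) atTop (nhds q))
    (hFinv : ∀ ξ > 0, 0 < Finv ξ ∧ F (Finv ξ) = ξ) :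
    MemL1ul N (fun x : EuclideanSpace ℝ (Fin N) => Finv (‖x‖ ^ A)) ∧
    MemL1ul N (fun x : EuclideanSpace ℝ (Fin N) => F (Finv (‖x‖ ^ A)) ^ (-r)) := by
  have hF_pos : ∀ u > 0, 0 < F u := fun u hu => hF u ▸
    setIntegral_pos_of_forall_pos measurableSet_Ioi (by simp) (hF_fin u hu)
      fun x hx => one_div_pos.2 (hf_pos x (hu.trans hx))
  have hF_deriv : ∀ u > 0, HasDerivAt F (-(1 / f u)) u := fun u hu => funext hF ▸
    hasDerivAt_setIntegral_Ioi (hF_fin (u / 2) (half_pos hu)) (half_lt_self hu)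
      (continuousAt_const.div (hf_diff u hu).continuousAt (hf_pos u hu).ne')
  have hFinv_anti : AntitoneOn Finv (Ioi 0) :=
    Function.antitoneOn_of_rightInvOn_of_mapsTo
      (antitoneOn_of_hasDerivAt_neg_one_div (convex_Ioi 0) hf_pos hF_deriv)
      (fun ξ hξ => (hFinv ξ hξ).2) fun ξ hξ => (hFinv ξ hξ).1
  constructor
  · have hN : (0 : ℝ) < N := (mul_nonneg hA.le hr).trans_lt hAr
    obtain ⟨s, hs_gt, hs_lt⟩ := exists_between
      (max_lt (div_pos hN hA) ((lt_div_iff₀' hA).2 hAq))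
    obtain ⟨hs0, hqs⟩ := max_lt_iff.1 hs_gt
    obtain ⟨a, C, hgrowth⟩ := exists_forall_le_add_mul_rpow_neg hs0 (sub_lt_iff_lt_add'.1 hqs)
      hf_pos hf_diff hF_pos hF_deriv hq
    refine memL1ul_comp_norm_rpow_of_antitoneOn (a := a) (C := C) hA.le hs0.le
      ((lt_div_iff₀' hA).1 hs_lt) hFinv_anti fun σ hσ => ?_
    obtain ⟨hpos, hright⟩ := hFinv σ hσ
    simpa only [abs_of_pos hpos, hright] using hgrowth (Finv σ) hpos
  · have heq : EqOn (fun σ => σ ^ (-r)) (fun σ => F (Finv σ) ^ (-r)) (Ioi 0) :=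
      fun σ hσ => by simp only [(hFinv σ hσ).2]
    refine memL1ul_comp_norm_rpow_of_antitoneOn (φ := fun σ => F (Finv σ) ^ (-r)) (a := 0) (C := 1)
      hA.le hr hAr ((antitoneOn_rpow_Ioi_of_exponent_nonpos (neg_nonpos.2 hr)).congr heq)
      fun σ hσ => ?_
    rw [(hFinv σ hσ).2, zero_add, one_mul, abs_of_nonneg (rpow_nonneg hσ.le _)]

/-- for 0 < r < N/(2-γ), 2-γ < A < N/r, f ∈ S_q with q ≤ 1+r and F(0) = ∞
(so that F⁻¹ inverts F on all of (0,∞)), the initial function u₀(x) = F⁻¹(|x|^A)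
satisfies u₀ ∈ L¹_ul(ℝ^N) and F(u₀)^{-r} ∈ L¹_ul(ℝ^N). -/
theorem statement18 (N : ℕ) (hN : 1 ≤ N) (γ : ℝ) (hγ : 0 < γ ∧ γ < min 2 (N : ℝ))
    (r : ℝ) (hr : 0 < r ∧ r < N / (2 - γ))
    (A : ℝ) (hA : 2 - γ < A ∧ A < N / r)
    (f f' : ℝ → ℝ) (q : ℝ) (hq1 : 1 ≤ q) (hqr : q ≤ 1 + r)
    (hf_cont : ContinuousOn f (Set.Ici 0))
    (hf_diff : ∀ x > 0, HasDerivAt f (f' x) x)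
    (hf'_cont : ContinuousOn f' (Set.Ioi 0))
    (hf_pos : ∀ x > 0, 0 < f x)
    (hf'_nonneg : ∀ x > 0, 0 ≤ f' x)
    (F : ℝ → ℝ) (hF : ∀ u, F u = ∫ τ in Set.Ioi u, 1 / f τ)
    (hF_fin : ∀ u > 0, IntegrableOn (fun τ => 1 / f τ) (Set.Ioi u))
    (hq : Tendsto (fun ξ => f' ξ * F ξ) atTop (nhds q))
    (Finv : ℝ → ℝ)
    (hFinv_left : ∀ u > 0, Finv (F u) = u)
    (hFinv_right : ∀ ξ > 0, 0 < Finv ξ ∧ F (Finv ξ) = ξ) :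
    MemL1ul N (fun x : EuclideanSpace ℝ (Fin N) => Finv (‖x‖ ^ A)) ∧
    MemL1ul N (fun x : EuclideanSpace ℝ (Fin N) =>
      F (Finv (‖x‖ ^ A)) ^ (-r)) := by
  have hA0 : 0 < A := by linarith [hA.1, hγ.2.trans_le (min_le_left _ _)]
  have hAr : A * r < N := (lt_div_iff₀ hr.1).1 hA.2
  have hAq : A * (q - 1) < N := hAr.trans_le' (by gcongr; linarith)
  exact statement18_general hr.1.le hA0 hAr hAq hf_diff hf_pos hF hF_fin hq hFinv_right
end
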